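/- arXiv:1710.01459 — 2 statements merged into one kernel-verified Lean document; each statement's English description precedes it below -/
import Mathlib

section
/- (Inductive step in the proof of Lemma 11.4 of the paper.) Assume a ∈ ℕ, a ≥ 1, and a + D·(d₁ + … + d_l) < d. Let E′₀ be a complex subspace of E with dim_ℂ E′₀ = a − 1 such that E′₀ ∩ F(v) = {0} for every v ∈ V. Then the set of vectors e ∈ E such that e ∉ E′₀ and (E′₀ + ℂ·e) ∩ F(v) = {0} for every v ∈ V is dense in E. -/
open scoped Manifold
open Bundle TopologicalSpace Module

/-!
If `P ∩ F(v) = 0`, then `(P + ℂ e) ∩ F(v) = 0` as soon as `e ∉ P + F(v)`, so it suffices that the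
union of `P` and of all the `P + F(v)` has Hausdorff dimension less than `2 dim_ℂ E`. Locally in
`v`, the space `P + F(v)` lies in the span of `n = dim P + d₁ + … + d_l` vectors depending on `v`
in a `C¹` way, so the union over nearby `v` lies in a `C¹` image of a piece of `ℝ ^ D × ℂ ^ n`, of
dimension at most `D + 2 n`, and countably many such pieces suffice. When all bundles have rank
zero the union is just `P`.
-/

open Set Filter Topology

section Submodule

variable {𝕜 E : Type*} [DivisionRing 𝕜] [AddCommGroup E] [Module 𝕜 E]

theorem disjoint_sup_span_singleton_of_notMem_sup {P Q : Submodule 𝕜 E} {e : E}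
    (hPQ : Disjoint P Q) (he : e ∉ P ⊔ Q) : Disjoint (P ⊔ Submodule.span 𝕜 {e}) Q := by
  rw [sup_comm]
  exact hPQ.disjoint_sup_left_of_disjoint_sup_right
    (Submodule.disjoint_span_singleton_of_notMem he).symm

end Submodule

section HausdorffDimension

variable {E : Type*} [NormedAddCommGroup E] [NormedSpace ℂ E]

theorem dimH_coe_submodule_eq_two_mul_finrank (P : Submodule ℂ E) [FiniteDimensional ℂ P] :
    dimH (P : Set E) = (2 * finrank ℂ P : ℕ) := by
  have := FiniteDimensional.complexToReal P
  rw [← finrank_real_of_complex, ← Real.dimH_univ_eq_finrank,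
    ← P.subtypeₗᵢ.isometry.dimH_image univ, image_univ]
  congr 1
  exact Subtype.range_coe.symm

variable {M : Type*} [NormedAddCommGroup M] [NormedSpace ℝ M] [FiniteDimensional ℝ M]

theorem dimH_biUnion_span_range_le_of_contDiffOn {κ : Type*} [Fintype κ] {s : Set M}
    (hs : Convex ℝ s) {g : κ → M → E} (hg : ∀ j, ContDiffOn ℝ 1 (g j) s) :
    dimH (⋃ x ∈ s, (Submodule.span ℂ (range fun j => g j x) : Set E)) ≤
      (finrank ℝ M + 2 * Fintype.card κ : ℕ) := by
  let Φ : M × (κ → ℂ) → E := fun z => ∑ j, z.2 j • g j z.1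
  have hΦ : ContDiffOn ℝ 1 Φ (s ×ˢ univ) := by
    refine ContDiffOn.sum fun j _ => ContDiffOn.smul ?_ ?_
    · exact ((contDiff_apply ℝ ℂ j).comp contDiff_snd).contDiffOn
    · exact (hg j).comp contDiff_fst.contDiffOn fun z hz => hz.1
  have hsub : (⋃ x ∈ s, (Submodule.span ℂ (range fun j => g j x) : Set E)) ⊆ Φ '' (s ×ˢ univ) := by
    refine iUnion₂_subset fun x hx e he => ?_
    obtain ⟨c, rfl⟩ := (Submodule.mem_span_range_iff_exists_fun ℂ).1 he
    exact ⟨(x, c), ⟨hx, trivial⟩, rfl⟩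
  calc
    _ ≤ dimH (Φ '' (s ×ˢ univ)) := dimH_mono hsub
    _ ≤ dimH (s ×ˢ (univ : Set (κ → ℂ))) := hΦ.dimH_image_le (hs.prod convex_univ) subset_rfl
    _ ≤ dimH (univ : Set (M × (κ → ℂ))) := dimH_mono (subset_univ _)
    _ = (finrank ℝ M + 2 * Fintype.card κ : ℕ) := by
      rw [Real.dimH_univ_eq_finrank, finrank_prod, finrank_real_of_complex,
        finrank_fintype_fun_eq_card]

variable {H : Type*} [TopologicalSpace H] {I : ModelWithCorners ℝ M H}
  {V : Type*} [TopologicalSpace V] [ChartedSpace H V]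

theorem exists_mem_nhds_dimH_biUnion_span_range_le {κ : Type*} [Fintype κ] {f : κ → V → E} {v₀ : V}
    (hf : ∀ j, ContMDiffAt I 𝓘(ℝ, E) 1 (f j) v₀) :
    ∃ N ∈ 𝓝 v₀, dimH (⋃ v ∈ N, (Submodule.span ℂ (range fun j => f j v) : Set E)) ≤
      (finrank ℝ M + 2 * Fintype.card κ : ℕ) := by
  set φ := extChartAt I v₀
  have hrange : ∀ v, φ v ∈ range I := fun v => mem_range_self _
  have hC1 : ∀ᶠ x in 𝓝[range I] (φ v₀), ∀ j,
      ContDiffWithinAt ℝ 1 (f j ∘ φ.symm) (range I) x := by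
    refine eventually_all.2 fun j => ?_
    have h := (contMDiffAt_iff.1 (hf j)).2.eventually (by simp)
    rwa [insert_eq_of_mem (hrange v₀)] at h
  obtain ⟨ε, hε, hball⟩ := Metric.mem_nhdsWithin_iff.1 hC1
  refine ⟨φ.source ∩ φ ⁻¹' Metric.ball (φ v₀) ε, inter_mem (extChartAt_source_mem_nhds v₀)
    ((continuousAt_extChartAt v₀).preimage_mem_nhds (Metric.ball_mem_nhds _ hε)), ?_⟩
  refine (dimH_mono ?_).trans (dimH_biUnion_span_range_le_of_contDiffOn
    (g := fun j => f j ∘ φ.symm) ((convex_ball (φ v₀) ε).inter I.convex_range)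
    fun j x hx => (hball hx j).mono inter_subset_right)
  refine iUnion₂_subset fun v hv => ?_
  refine subset_iUnion₂_of_subset (φ v) ⟨hv.2, hrange v⟩ ?_
  simp only [Function.comp_apply, φ.left_inv hv.1, subset_rfl]

end HausdorffDimension

section C1Spanned

variable {E : Type*} [NormedAddCommGroup E] [NormedSpace ℂ E]
  {M : Type*} [NormedAddCommGroup M] [NormedSpace ℝ M]
  {H : Type*} [TopologicalSpace H] {I : ModelWithCorners ℝ M H}
  {V : Type*} [TopologicalSpace V] [ChartedSpace H V]

variable (I) in
/-- The family of subspaces `S v` is, for `v` near `v₀`, contained in the span of `n` vectors of `E`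
that depend on `v` in a way that is `C¹` at `v₀`. Containment, rather than equality, lets the
dimension of `S v` vary with `v`. -/
def C1SpannedAt (S : V → Submodule ℂ E) (n : ℕ) (v₀ : V) : Prop :=
  ∃ f : Fin n → V → E, (∀ j, ContMDiffAt I 𝓘(ℝ, E) 1 (f j) v₀) ∧
    ∀ᶠ v in 𝓝 v₀, S v ≤ Submodule.span ℂ (range fun j => f j v)

namespace C1SpannedAt

variable {S T : V → Submodule ℂ E} {m n : ℕ} {v₀ : V}

theorem eq_bot (hS : C1SpannedAt I S 0 v₀) : S v₀ = ⊥ := by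
  obtain ⟨f, -, hspan⟩ := hS
  simpa only [range_eq_empty, Submodule.span_empty, le_bot_iff] using hspan.self_of_nhds

theorem const (P : Submodule ℂ E) [FiniteDimensional ℂ P] :
    C1SpannedAt I (fun _ => P) (finrank ℂ P) v₀ := by
  let b := finBasis ℂ P
  refine ⟨fun j _ => b j, fun j => contMDiffAt_const, .of_forall fun _ => ?_⟩
  rw [range_comp' Subtype.val b, ← P.coe_subtype, ← Submodule.map_span, b.span_eq,
    Submodule.map_subtype_top]

theorem sup (hS : C1SpannedAt I S m v₀) (hT : C1SpannedAt I T n v₀) :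
    C1SpannedAt I (fun v => S v ⊔ T v) (m + n) v₀ := by
  obtain ⟨f, hf, hSf⟩ := hS
  obtain ⟨g, hg, hTg⟩ := hT
  refine ⟨Fin.append f g, Fin.addCases (by simpa using hf) (by simpa using hg), ?_⟩
  filter_upwards [hSf, hTg] with v hSv hTv
  refine sup_le (hSv.trans (Submodule.span_mono ?_)) (hTv.trans (Submodule.span_mono ?_))
  · exact range_subset_iff.2 fun j => ⟨Fin.castAdd n j, by simp only [Fin.append_left]⟩
  · exact range_subset_iff.2 fun j => ⟨Fin.natAdd m j, by simp only [Fin.append_right]⟩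

theorem biSup {ι : Type*} {S : ι → V → Submodule ℂ E} {r : ι → ℕ} (J : Finset ι)
    (hS : ∀ i ∈ J, C1SpannedAt I (S i) (r i) v₀) :
    C1SpannedAt I (fun v => ⨆ i ∈ J, S i v) (∑ i ∈ J, r i) v₀ := by
  classical
  induction J using Finset.induction_on with
  | empty => simpa using const (I := I) (v₀ := v₀) (⊥ : Submodule ℂ E)
  | insert i J hi ih =>
    simp only [Finset.iSup_insert, Finset.sum_insert hi]
    exact (hS i (J.mem_insert_self i)).sup (ih fun j hj => hS j (Finset.mem_insert_of_mem hj))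

variable [FiniteDimensional ℝ M] [SecondCountableTopology V]

theorem dimH_biUnion_le {s : Set V} (hS : ∀ v ∈ s, C1SpannedAt I S n v) :
    dimH (⋃ v ∈ s, (S v : Set E)) ≤ (finrank ℝ M + 2 * n : ℕ) := by
  have hlocal : ∀ v₀ ∈ s, ∃ N ∈ 𝓝 v₀,
      dimH (⋃ v ∈ N, (S v : Set E)) ≤ (finrank ℝ M + 2 * n : ℕ) := by
    intro v₀ hv₀
    obtain ⟨f, hf, hspan⟩ := hS v₀ hv₀
    obtain ⟨N, hN, hdim⟩ := exists_mem_nhds_dimH_biUnion_span_range_le hf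
    rw [Fintype.card_fin] at hdim
    refine ⟨_, inter_mem hN hspan, (dimH_mono ?_).trans hdim⟩
    exact iUnion₂_mono' fun v hv => ⟨v, hv.1, hv.2⟩
  choose! N hN hdim using hlocal
  obtain ⟨t, hts, htc, hcover⟩ :=
    countable_cover_nhdsWithin fun v hv => mem_nhdsWithin_of_mem_nhds (hN v hv)
  calc
    _ ≤ dimH (⋃ v₀ ∈ t, ⋃ v ∈ N v₀, (S v : Set E)) := by
      refine dimH_mono (iUnion₂_subset fun v hv => ?_)
      obtain ⟨v₀, hv₀, hvN⟩ := mem_iUnion₂.1 (hcover hv)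
      exact subset_iUnion₂_of_subset v₀ hv₀ (subset_iUnion₂_of_subset v hvN subset_rfl)
    _ ≤ (finrank ℝ M + 2 * n : ℕ) := by
      rw [dimH_bUnion htc]
      exact iSup₂_le fun v₀ hv₀ => hdim v₀ (hts hv₀)

end C1SpannedAt

variable {ι : Type*} [Fintype ι] {S : ι → V → Submodule ℂ E} {r : ι → ℕ}
  [FiniteDimensional ℝ M] [SecondCountableTopology V]

-- The set of indices `i` with `S i v ≠ ⊥` need not be locally constant in `v`, so the union is
-- first split according to this set.
theorem dimH_iUnion_sup_iSup_le (P : Submodule ℂ E) [FiniteDimensional ℂ P]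
    (hS : ∀ i v, S i v ≠ ⊥ → C1SpannedAt I (S i) (r i) v) :
    dimH (⋃ v, (P ⊔ ⨆ i, S i v : Submodule ℂ E) : Set E) ≤
      (finrank ℝ M + 2 * (finrank ℂ P + ∑ i, r i) : ℕ) := by
  classical
  let s : Finset ι → Set V := fun J => {v | ∀ i ∈ J, C1SpannedAt I (S i) (r i) v}
  have hsub : (⋃ v, (P ⊔ ⨆ i, S i v : Submodule ℂ E) : Set E) ⊆
      ⋃ J : Finset ι, ⋃ v ∈ s J, (P ⊔ ⨆ i ∈ J, S i v : Submodule ℂ E) := by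
    refine iUnion_subset fun v => ?_
    let J := Finset.univ.filter fun i => S i v ≠ ⊥
    have hvJ : v ∈ s J := fun i hi => hS i v (Finset.mem_filter.1 hi).2
    refine subset_iUnion_of_subset J (subset_iUnion₂_of_subset v hvJ ?_)
    refine SetLike.coe_subset_coe.2 (sup_le_sup_left (iSup_le fun i => ?_) P)
    by_cases hi : S i v = ⊥
    · exact hi ▸ bot_le
    · exact le_biSup (fun i => S i v) (Finset.mem_filter.2 ⟨Finset.mem_univ i, hi⟩)
  refine (dimH_mono hsub).trans ?_
  rw [dimH_iUnion]
  refine iSup_le fun J => ?_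
  calc
    _ ≤ ((finrank ℝ M + 2 * (finrank ℂ P + ∑ i ∈ J, r i) : ℕ) : ENNReal) :=
      C1SpannedAt.dimH_biUnion_le fun v hv => (C1SpannedAt.const P).sup (C1SpannedAt.biSup J hv)
    _ ≤ (finrank ℝ M + 2 * (finrank ℂ P + ∑ i, r i) : ℕ) := by
      have := Finset.sum_le_univ_sum_of_nonneg (s := J) fun i => (r i).zero_le
      gcongr

theorem dimH_union_iUnion_sup_iSup_lt [FiniteDimensional ℂ E] {P : Submodule ℂ E}
    (hS : ∀ i v, S i v ≠ ⊥ → C1SpannedAt I (S i) (r i) v)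
    (hP : finrank ℂ P < finrank ℂ E)
    (hdim : ∑ i, r i ≠ 0 → finrank ℝ M + 2 * (finrank ℂ P + ∑ i, r i) < 2 * finrank ℂ E) :
    dimH (P ∪ ⋃ v, (P ⊔ ⨆ i, S i v : Submodule ℂ E) : Set E) < finrank ℝ E := by
  have hdimP : dimH (P : Set E) < finrank ℝ E := by
    rw [dimH_coe_submodule_eq_two_mul_finrank, finrank_real_of_complex]
    exact_mod_cast (by lia : 2 * finrank ℂ P < 2 * finrank ℂ E)
  by_cases hr : ∑ i, r i = 0
  · have hbot : ∀ i v, S i v = ⊥ := fun i v => by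
      by_contra hne
      have hri : r i = 0 := Finset.sum_eq_zero_iff.1 hr i (Finset.mem_univ i)
      exact hne (hri ▸ hS i v hne).eq_bot
    refine (dimH_mono (union_subset subset_rfl (iUnion_subset fun v => ?_))).trans_lt hdimP
    simp only [hbot, iSup_bot, sup_bot_eq, subset_rfl]
  · rw [dimH_union]
    refine max_lt hdimP ((dimH_iUnion_sup_iSup_le P hS).trans_lt ?_)
    rw [finrank_real_of_complex]
    exact_mod_cast hdim hr

theorem dense_setOf_notMem_and_sup_span_singleton_inf_eq_bot [FiniteDimensional ℂ E]
    {P : Submodule ℂ E} (hS : ∀ i v, S i v ≠ ⊥ → C1SpannedAt I (S i) (r i) v)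
    (hP : finrank ℂ P < finrank ℂ E)
    (hdim : ∑ i, r i ≠ 0 → finrank ℝ M + 2 * (finrank ℂ P + ∑ i, r i) < 2 * finrank ℂ E)
    (hPS : ∀ v, P ⊓ ⨆ i, S i v = ⊥) :
    Dense {e : E | e ∉ P ∧ ∀ v, (P ⊔ Submodule.span ℂ {e}) ⊓ ⨆ i, S i v = ⊥} := by
  have := FiniteDimensional.complexToReal E
  refine (dense_compl_of_dimH_lt_finrank (dimH_union_iUnion_sup_iSup_lt hS hP hdim)).mono ?_
  intro e he
  simp only [mem_compl_iff, mem_union, mem_iUnion, SetLike.mem_coe, not_or, not_exists] at he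
  exact ⟨he.1, fun v => (disjoint_sup_span_singleton_of_notMem_sup
    (disjoint_iff.2 (hPS v)) (he.2 v)).eq_bot⟩

end C1Spanned

section LocalSection

variable {𝕜 : Type*} [NontriviallyNormedField 𝕜] {M : Type*} [NormedAddCommGroup M]
  [NormedSpace 𝕜 M] {H : Type*} [TopologicalSpace H] {I : ModelWithCorners 𝕜 M H}
  {F : Type*} [NormedAddCommGroup F] [NormedSpace 𝕜 F]
  {B : Type*} [TopologicalSpace B] [ChartedSpace H B]
  {Ef : B → Type*} [∀ x, Nonempty (Ef x)] [∀ x, TopologicalSpace (Ef x)]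
  [TopologicalSpace (TotalSpace F Ef)] [FiberBundle F Ef]

theorem contMDiffAt_mk_trivializationAt_symm {n : WithTop ℕ∞} (b₀ : B) (u : F) :
    ContMDiffAt I (I.prod 𝓘(𝕜, F)) n
      (fun b => TotalSpace.mk' F b ((trivializationAt F Ef b₀).symm b u)) b₀ := by
  rw [contMDiffAt_section]
  refine (contMDiffAt_const (c := u)).congr_of_eventuallyEq ?_
  filter_upwards [(trivializationAt F Ef b₀).open_baseSet.mem_nhds
    (mem_baseSet_trivializationAt F Ef b₀)] with b hb
  rw [(trivializationAt F Ef b₀).apply_mk_symm hb]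

end LocalSection

section Bundle

variable {E : Type*} [NormedAddCommGroup E] [NormedSpace ℂ E]
  {M : Type*} [NormedAddCommGroup M] [NormedSpace ℝ M]
  {H : Type*} [TopologicalSpace H] {I : ModelWithCorners ℝ M H}
  {F : Type*} [NormedAddCommGroup F] [NormedSpace ℂ F]

section Base

variable {B : Type*} [TopologicalSpace B] [ChartedSpace H B]
  {Ef : B → Type*} [∀ x, AddCommGroup (Ef x)] [∀ x, Module ℂ (Ef x)] [∀ x, TopologicalSpace (Ef x)]
  [TopologicalSpace (TotalSpace F Ef)] [FiberBundle F Ef] [VectorBundle ℂ F Ef]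
  [FiniteDimensional ℂ F]

theorem C1SpannedAt.span_range_fiber {Φ : TotalSpace F Ef → E}
    (hΦ : ContMDiff (I.prod 𝓘(ℝ, F)) 𝓘(ℝ, E) 1 Φ)
    (hlin : ∀ x, IsLinearMap ℂ fun w : Ef x => Φ ⟨x, w⟩) (b₀ : B) :
    C1SpannedAt I (fun b => Submodule.span ℂ (range fun w : Ef b => Φ ⟨b, w⟩))
      (finrank ℂ F) b₀ := by
  let t := trivializationAt F Ef b₀
  let basis := finBasis ℂ F
  refine ⟨fun j b => Φ ⟨b, t.symm b (basis j)⟩, fun j => ?_, ?_⟩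
  · exact (hΦ _).comp b₀ (contMDiffAt_mk_trivializationAt_symm b₀ (basis j))
  filter_upwards [t.open_baseSet.mem_nhds (mem_baseSet_trivializationAt F Ef b₀)] with b hb
  let L : F →ₗ[ℂ] E := (hlin b).mk' _ ∘ₗ t.symmₗ ℂ b
  have hL : ∀ u, Φ ⟨b, t.symm b u⟩ = L u := fun u => by
    rw [← t.coe_symmₗ (R := ℂ) hb]
    rfl
  simp only [hL]
  rw [Submodule.span_le, range_comp' L basis, ← Submodule.map_span, basis.span_eq]
  rintro _ ⟨w, rfl⟩
  exact ⟨t.linearMapAt ℂ b w, trivial, by rw [← hL, t.symm_linearMapAt hb]⟩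

end Base

variable {V : Type*} [TopologicalSpace V]

/-- The span of the image under `Φ` of the fibre over `v` of a bundle over `U`, when `v` lies in the
set `K ⊆ U`; it is `⊥` when `v ∉ K`. The span `F(v)` attached to a finite family of bundles is
`⨆ i, fiberSpan (hKU i) (Φ i) v`. -/
def fiberSpan {U : Opens V} {Ef : U → Type*} {K : Set V} (hKU : K ⊆ (U : Set V))
    (Φ : TotalSpace F Ef → E) (v : V) : Submodule ℂ E :=
  ⨆ h : v ∈ K, Submodule.span ℂ (range fun w : Ef ⟨v, hKU h⟩ => Φ ⟨⟨v, hKU h⟩, w⟩)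

variable [ChartedSpace H V]

theorem C1SpannedAt.of_opens {U : Opens V} {S : V → Submodule ℂ E} {T : U → Submodule ℂ E} {n : ℕ}
    {u₀ : U} (hT : C1SpannedAt I T n u₀) (hST : ∀ u : U, S u ≤ T u) :
    C1SpannedAt I S n u₀ := by
  obtain ⟨f, hf, hspan⟩ := hT
  have hext : ∀ j (u : U), Function.extend Subtype.val (f j) 0 u = f j u := fun j =>
    Subtype.val_injective.extend_apply (f j) 0
  refine ⟨fun j => Function.extend Subtype.val (f j) 0, fun j => ?_, ?_⟩
  · rw [← contMDiffAt_subtype_iff]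
    simpa only [hext] using hf j
  · rw [← U.isOpenEmbedding'.map_nhds_eq u₀, eventually_map]
    filter_upwards [hspan] with u hu
    simpa only [hext] using (hST u).trans hu

variable {U : Opens V} {Ef : U → Type*} [∀ x, AddCommGroup (Ef x)] [∀ x, Module ℂ (Ef x)]
  [∀ x, TopologicalSpace (Ef x)] [TopologicalSpace (TotalSpace F Ef)] [FiberBundle F Ef]
  [VectorBundle ℂ F Ef] [FiniteDimensional ℂ F]

theorem C1SpannedAt.fiberSpan {K : Set V} (hKU : K ⊆ (U : Set V)) {Φ : TotalSpace F Ef → E}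
    (hΦ : ContMDiff (I.prod 𝓘(ℝ, F)) 𝓘(ℝ, E) 1 Φ)
    (hlin : ∀ x, IsLinearMap ℂ fun w : Ef x => Φ ⟨x, w⟩) {v : V}
    (hv : fiberSpan hKU Φ v ≠ ⊥) :
    C1SpannedAt I (fiberSpan hKU Φ) (finrank ℂ F) v := by
  have hvK : v ∈ K := by
    by_contra hvK
    exact hv (iSup_neg hvK)
  exact (span_range_fiber hΦ hlin ⟨v, hKU hvK⟩).of_opens fun u => iSup_le fun _ => le_rfl

end Bundle

theorem dense_vectors_extending_transverse_subspace_general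
    {E : Type*} [NormedAddCommGroup E] [NormedSpace ℂ E] [FiniteDimensional ℂ E]
    {M : Type*} [NormedAddCommGroup M] [NormedSpace ℝ M] [FiniteDimensional ℝ M]
    {H : Type*} [TopologicalSpace H] {I : ModelWithCorners ℝ M H}
    {V : Type*} [TopologicalSpace V] [SecondCountableTopology V] [ChartedSpace H V]
    {ι : Type*} [Fintype ι] {F : ι → Type*} [∀ i, NormedAddCommGroup (F i)]
    [∀ i, NormedSpace ℂ (F i)] [∀ i, FiniteDimensional ℂ (F i)]
    {U : ι → Opens V} {K : ι → Set V} (hKU : ∀ i, K i ⊆ (U i : Set V))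
    {Ef : (i : ι) → U i → Type*} [∀ i x, AddCommGroup (Ef i x)] [∀ i x, Module ℂ (Ef i x)]
    [∀ i x, TopologicalSpace (Ef i x)] [∀ i, TopologicalSpace (TotalSpace (F i) (Ef i))]
    [∀ i, FiberBundle (F i) (Ef i)] [∀ i, VectorBundle ℂ (F i) (Ef i)]
    {Φ : (i : ι) → TotalSpace (F i) (Ef i) → E}
    (hΦ : ∀ i, ContMDiff (I.prod 𝓘(ℝ, F i)) 𝓘(ℝ, E) 1 (Φ i))
    (hlin : ∀ i x, IsLinearMap ℂ fun w : Ef i x => Φ i ⟨x, w⟩)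
    {P : Submodule ℂ E} (hP : finrank ℂ P < finrank ℂ E)
    (hdim : ∑ i, finrank ℂ (F i) ≠ 0 →
      finrank ℝ M + 2 * (finrank ℂ P + ∑ i, finrank ℂ (F i)) < 2 * finrank ℂ E)
    (hPF : ∀ v, P ⊓ ⨆ i, fiberSpan (hKU i) (Φ i) v = ⊥) :
    Dense {e : E | e ∉ P ∧ ∀ v,
      (P ⊔ Submodule.span ℂ {e}) ⊓ ⨆ i, fiberSpan (hKU i) (Φ i) v = ⊥} :=
  dense_setOf_notMem_and_sup_span_singleton_inf_eq_bot
    (fun i _ => C1SpannedAt.fiberSpan (hKU i) (hΦ i) (hlin i)) hP hdim hPF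

theorem add_two_mul_add_lt_two_mul_of_add_mul_lt {D S p d : ℕ} (hD : 1 ≤ D) (hS : S ≠ 0)
    (h : p + D * S < d) : D + 2 * (p + S) < 2 * d := by
  have hsum : D + S ≤ D * S + 1 := by nlinarith [Nat.pos_of_ne_zero hS]
  lia

/-- **Inductive step in the proof of Lemma 11.4 of the paper.**
Setting as in Lemma 11.4: `E` is a complex normed space of dimension `d`, `V` a second-countable
`C¹` real manifold without boundary of dimension `D ≥ 1`; for `i = 1, …, l`, `K i` is a compact
subset of the open set `Vo i ⊆ V`, `Efam i` is a `C¹` complex vector bundle of rank `dI i` over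
`Vo i`, and `Fmap i` is a `C¹` map from its total space to `E` which is complex-linear on each
fiber; `F(v)` is the subspace of `E` spanned by the images of the fibers over `v` of the bundles
with `v ∈ K i`.  Assume `a ≥ 1` and `a + D·(d₁ + … + d_l) < d`, and let `E'₀` be an
`(a-1)`-dimensional subspace with `E'₀ ∩ F(v) = {0}` for all `v`.  Then the set of vectors
`e ∉ E'₀` with `(E'₀ + ℂ e) ∩ F(v) = {0}` for all `v` is dense in `E`. -/
theorem dense_vectors_extending_transverse_subspace
    {D l d a : ℕ} (hD : 1 ≤ D)
    {E : Type} [NormedAddCommGroup E] [NormedSpace ℂ E] [FiniteDimensional ℂ E]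
    (hd : finrank ℂ E = d)
    {V : Type} [TopologicalSpace V] [T2Space V] [SecondCountableTopology V]
    [ChartedSpace (EuclideanSpace ℝ (Fin D)) V]
    [HasGroupoid V (contDiffGroupoid 1 (𝓡 D))]
    (dI : Fin l → ℕ)
    (Vo : Fin l → Opens V) (K : Fin l → Set V)
    (hKcpt : ∀ i, IsCompact (K i)) (hKV : ∀ i, K i ⊆ (Vo i : Set V))
    (Efam : (i : Fin l) → (Vo i) → Type)
    [∀ i x, AddCommGroup (Efam i x)] [∀ i x, Module ℂ (Efam i x)]
    [∀ i x, TopologicalSpace (Efam i x)]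
    [∀ i, TopologicalSpace (TotalSpace (EuclideanSpace ℂ (Fin (dI i))) (Efam i))]
    [∀ i, FiberBundle (EuclideanSpace ℂ (Fin (dI i))) (Efam i)]
    [∀ i, VectorBundle ℂ (EuclideanSpace ℂ (Fin (dI i))) (Efam i)]
    -- the coordinate changes of each bundle are `C¹`
    (hbundle : ∀ i, ∀ (e e' : Trivialization (EuclideanSpace ℂ (Fin (dI i)))
        (Bundle.TotalSpace.proj (E := Efam i)))
        [MemTrivializationAtlas e] [MemTrivializationAtlas e'],
        ContMDiffOn (𝓡 D)
          𝓘(ℝ, EuclideanSpace ℂ (Fin (dI i)) →L[ℂ] EuclideanSpace ℂ (Fin (dI i))) 1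
          (fun b => (e.coordChangeL ℂ e' b :
            EuclideanSpace ℂ (Fin (dI i)) →L[ℂ] EuclideanSpace ℂ (Fin (dI i))))
          (e.baseSet ∩ e'.baseSet))
    (Fmap : (i : Fin l) → TotalSpace (EuclideanSpace ℂ (Fin (dI i))) (Efam i) → E)
    (hFC1 : ∀ i, ContMDiff ((𝓡 D).prod 𝓘(ℝ, EuclideanSpace ℂ (Fin (dI i)))) 𝓘(ℝ, E) 1 (Fmap i))
    (hFlin : ∀ i (x : Vo i), IsLinearMap ℂ (fun w : Efam i x => Fmap i ⟨x, w⟩))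
    (ha : 1 ≤ a) (hdim : a + D * (∑ i, dI i) < d)
    (E'₀ : Submodule ℂ E) (hE'₀dim : finrank ℂ E'₀ = a - 1)
    (hE'₀ : ∀ v : V,
      E'₀ ⊓ (⨆ i, ⨆ (h : v ∈ K i),
        Submodule.span ℂ (Set.range fun w : Efam i ⟨v, hKV i h⟩ =>
          Fmap i ⟨⟨v, hKV i h⟩, w⟩)) = ⊥) :
    Dense {e : E | e ∉ E'₀ ∧ ∀ v : V,
      (E'₀ ⊔ Submodule.span ℂ {e}) ⊓
        (⨆ i, ⨆ (h : v ∈ K i),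
          Submodule.span ℂ (Set.range fun w : Efam i ⟨v, hKV i h⟩ =>
            Fmap i ⟨⟨v, hKV i h⟩, w⟩)) = ⊥} := by
  refine dense_vectors_extending_transverse_subspace_general hKV hFC1 hFlin (by lia)
    (fun hrank => ?_) hE'₀
  simp only [finrank_euclideanSpace_fin] at hrank ⊢
  exact add_two_mul_add_lt_two_mul_of_add_mul_lt hD hrank (by lia)
end

section
/- (Lemma 11.6 of the paper, the Γ-equivariant version of Lemma 11.4.) Let d′ ∈ ℕ and assume that every finite-dimensional simple ℂ[Γ]-module has multiplicity strictly greater than d′ in E. Let E₁ be a Γ-invariant complex subspace of E and let a be the maximum, over finite-dimensional simple ℂ[Γ]-modules W, of the multiplicity of W in E₁. Assume a + g·D·(d₁ + … + d_l) < d′. Then for every ε > 0 there exists a Γ-equivariant ℂ-linear automorphism h of E with operator norm ‖h − id_E‖ < ε such that the Γ-invariant subspace E₀ = h(E₁) (which is isomorphic to E₁ as a Γ-module) satisfies E₀ ∩ F(v) = {0} for every v ∈ V. (The data V_i, K_i, 𝓔_i, F_i are not assumed Γ-equivariant.) -/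
open scoped Manifold
open Bundle TopologicalSpace Module

/-- The `ℂ`-subspace of `Hom_ℂ(W, E)` consisting of the `Γ`-equivariant linear maps taking
values in a given subspace `E'` of `E`.  Its dimension is the multiplicity of `W` in `E'`. -/
def equivariantHomInto {Γ E W : Type*} [Monoid Γ]
    [AddCommGroup E] [Module ℂ E] [AddCommGroup W] [Module ℂ W]
    (ρ : Representation ℂ Γ E) (σW : Representation ℂ Γ W)
    (E' : Submodule ℂ E) : Submodule ℂ (W →ₗ[ℂ] E) where
  carrier := {f | (∀ (γ : Γ) (w : W), f (σW γ w) = ρ γ (f w)) ∧ ∀ w : W, f w ∈ E'}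
  add_mem' := by
    intro f g hf hg
    exact ⟨fun γ w => by simp [hf.1 γ w, hg.1 γ w],
      fun w => E'.add_mem (hf.2 w) (hg.2 w)⟩
  zero_mem' := ⟨fun γ w => by simp, fun w => E'.zero_mem⟩
  smul_mem' := by
    intro c f hf
    exact ⟨fun γ w => by simp [hf.1 γ w], fun w => E'.smul_mem c (hf.2 w)⟩

/-!
On each of the finitely many sets where `{i | v ∈ Vᵢ}` is constant, `F v` is spanned locally by the
images of `C¹` frames. Hence the union over `v` of the spans of the `Γ`-translates of `F v` has
Hausdorff dimension at most `D + 2 g ∑ dᵢ`. It is a union of `Γ`-invariant subspaces, and it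
suffices to move `E₁` off those.

Peel the simple summands off `E₁` one at a time. Let `S ≤ E₁` be simple with complement `C`, and
suppose `h` already moves `E₁ ⊓ C` off every invariant subspace `F i`. Replace `h` by `h + y ∘ P`,
where `P` is the projection onto `S` along `C` and `y : S → E` is equivariant. If `E₁` meets the
preimage of `F i` nontrivially, then `P` maps the intersection isomorphically onto `S`, and the
inverse is some `k : S → E₁` with `h ∘ k + y` mapping `S` into `F i`. Fix `s ≠ 0` in `S`. By Schur's
lemma evaluation at `s` is injective on `Hom(S, E)`, while the vectors `h (k s)` fill a space of
dimension at most `dim Hom(S, E₁)`. So if `dim Hom(S, E)` exceeds this number plus the dimension of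
the union of the `F i`, some `y` avoids all coincidences. As the `F i` are cones, `y` may be taken
small.
-/

section GeneralPosition

theorem exists_forall_add_notMem_of_dimH_add_finrank_lt {H E : Type*} [AddCommGroup H] [Module ℝ H]
    [NormedAddCommGroup E] [NormedSpace ℝ E] [FiniteDimensional ℝ E]
    {T : H →ₗ[ℝ] E} (hT : Function.Injective T) (Q : Submodule ℝ E) {s : Set E}
    (hs : dimH s + finrank ℝ Q < finrank ℝ H) :
    ∃ y : H, ∀ q ∈ Q, q + T y ∉ s := by
  by_contra! hbad
  have : FiniteDimensional ℝ H := Module.Finite.of_injective T hT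
  have : IsClosed (Q : Set E) := Q.closed_of_finiteDimensional
  let T' : H →ₗ[ℝ] E ⧸ Q := Q.mkQ ∘ₗ T
  have range_subset : (LinearMap.range T' : Set (E ⧸ Q)) ⊆ Q.mkQ '' s := by
    rintro _ ⟨y, rfl⟩
    obtain ⟨q, hq, hqs⟩ := hbad y
    exact ⟨q + T y, hqs, by simp [T', hq]⟩
  have range_le_dimH : (finrank ℝ (LinearMap.range T') : ENNReal) ≤ dimH s := by
    rw [← Real.dimH_univ_eq_finrank, ← isometry_subtype_coe.dimH_image, Set.image_univ,
      Subtype.range_coe]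
    exact (dimH_mono range_subset).trans
      ((LinearMap.toContinuousLinearMap Q.mkQ).lipschitz.dimH_image_le s)
  have ker_le : finrank ℝ (LinearMap.ker T') ≤ finrank ℝ Q := by
    rw [LinearMap.ker_comp, Submodule.ker_mkQ]
    exact LinearMap.finrank_le_finrank_of_injective
      (f := T.restrict fun _ hx ↦ hx) fun _ _ h ↦ Subtype.ext (hT (congrArg Subtype.val h))
  refine hs.not_ge ?_
  calc (finrank ℝ H : ENNReal)
      = finrank ℝ (LinearMap.range T') + finrank ℝ (LinearMap.ker T') := by
        rw [← LinearMap.finrank_range_add_finrank_ker T', Nat.cast_add]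
    _ ≤ dimH s + finrank ℝ Q := by gcongr

theorem exists_ne_zero_seminorm_smul_lt {M : Type*} [AddCommGroup M] [Module ℝ M] (p : Seminorm ℝ M)
    (x : M) {δ : ℝ} (hδ : 0 < δ) : ∃ t : ℝ, t ≠ 0 ∧ p (t • x) < δ := by
  obtain ⟨t, ht, hpt⟩ := exists_pos_mul_lt hδ (p x)
  exact ⟨t, ht.ne', by rwa [map_smul_eq_mul, Real.norm_of_nonneg ht.le, mul_comm]⟩

theorem applyₗ'_injective_of_isSimpleModule {R S M : Type*} (k : Type*) [Ring R] [Semiring k]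
    [AddCommGroup S] [Module R S] [IsSimpleModule R S] [AddCommGroup M] [Module R M] [Module k M]
    [SMulCommClass R k M] {s : S} (hs : s ≠ 0) :
    Function.Injective (LinearMap.applyₗ' (M := S) (M₂ := M) (R := R) k s) := by
  intro f g hfg
  rw [← sub_eq_zero]
  refine (LinearMap.injective_or_eq_zero (f - g)).resolve_left fun hinj ↦ hs (hinj ?_)
  simpa [sub_eq_zero] using hfg

theorem disjoint_comap_add_comp_projectionOnto {R E : Type*} [Ring R] [AddCommGroup E] [Module R E]
    {S C X F : Submodule R E} [IsSimpleModule R S] (hSC : IsCompl S C) {h : E →ₗ[R] E}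
    (hdisj : Disjoint (X ⊓ C) (F.comap h)) {y : S →ₗ[R] E} {s : S}
    (hy : ∀ k : S →ₗ[R] X, h (k s) + y s ∉ F) :
    Disjoint X (F.comap (h + y ∘ₗ S.projectionOnto C hSC)) := by
  set P := S.projectionOnto C hSC
  by_contra hnot
  let M := X ⊓ F.comap (h + y ∘ₗ P)
  have projection_injective : Function.Injective (P ∘ₗ M.subtype) := by
    rw [injective_iff_map_eq_zero]
    rintro ⟨m, hmX, hmF⟩ hm
    replace hm : P m = 0 := hm
    have hmC : m ∈ C := (Submodule.projectionOnto_apply_eq_zero_iff hSC).1 hm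
    exact Subtype.ext (Submodule.disjoint_def.1 hdisj m ⟨hmX, hmC⟩ (by simpa [hm] using hmF))
  have projection_ne_zero : P ∘ₗ M.subtype ≠ 0 := by
    intro hzero
    rw [hzero] at projection_injective
    refine hnot (Submodule.disjoint_def.2 fun x hxX hxF ↦ ?_)
    exact congrArg Subtype.val (@projection_injective ⟨x, hxX, hxF⟩ 0 rfl)
  let e : M ≃ₗ[R] S := LinearEquiv.ofBijective (P ∘ₗ M.subtype)
    ⟨projection_injective, LinearMap.surjective_of_ne_zero projection_ne_zero⟩
  have projection_section : P (e.symm s) = s := e.apply_symm_apply s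
  refine hy (Submodule.inclusion inf_le_left ∘ₗ e.symm.toLinearMap) ?_
  simpa [projection_section] using (e.symm s).2.2

variable {R E ι : Type*} [Ring R] [Algebra ℝ R] [NormedAddCommGroup E] [NormedSpace ℝ E]
  [FiniteDimensional ℝ E] [Module R E] [IsScalarTower ℝ R E]

theorem exists_small_forall_add_notMem {F : ι → Submodule R E} {E₁ S : Submodule R E}
    [IsSimpleModule R S]
    (hdim : dimH (⋃ i, (F i : Set E)) + finrank ℝ (S →ₗ[R] E₁) < finrank ℝ (S →ₗ[R] E))
    (h : E →ₗ[R] E) (p : Seminorm ℝ (S →ₗ[R] E)) {δ : ℝ} (hδ : 0 < δ) {s : S} (hs : s ≠ 0) :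
    ∃ y : S →ₗ[R] E, p y < δ ∧ ∀ i, ∀ k : S →ₗ[R] E₁, h (k s) + y s ∉ F i := by
  have : FiniteDimensional ℝ (S →ₗ[R] E₁) :=
    have : FiniteDimensional ℝ E₁ := inferInstanceAs (FiniteDimensional ℝ (E₁.restrictScalars ℝ))
    Module.Finite.of_injective _ (applyₗ'_injective_of_isSimpleModule ℝ hs)
  let Z : (S →ₗ[R] E₁) →ₗ[ℝ] E :=
    (h ∘ₗ E₁.subtype).restrictScalars ℝ ∘ₗ LinearMap.applyₗ' ℝ s
  obtain ⟨y, hy⟩ := exists_forall_add_notMem_of_dimH_add_finrank_lt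
    (applyₗ'_injective_of_isSimpleModule ℝ hs) (LinearMap.range Z) (hdim.trans_le' (by
      gcongr; exact Z.finrank_range_le))
  obtain ⟨t, ht, hpt⟩ := exists_ne_zero_seminorm_smul_lt p y hδ
  refine ⟨t • y, hpt, fun i k hki ↦ hy (t⁻¹ • Z k) ⟨t⁻¹ • k, map_smul _ _ _⟩ ?_⟩
  have hmem : t⁻¹ • (h (k s) + t • y s) ∈ F i := (F i).smul_of_tower_mem t⁻¹ hki
  rw [smul_add, inv_smul_smul₀ ht] at hmem
  exact Set.mem_iUnion.2 ⟨i, hmem⟩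

theorem exists_disjoint_comap_of_dimH_lt [IsSemisimpleModule R E] (F : ι → Submodule R E)
    (E₁ : Submodule R E)
    (hdim : ∀ S ≤ E₁, IsSimpleModule R S →
      dimH (⋃ i, (F i : Set E)) + finrank ℝ (S →ₗ[R] E₁) < finrank ℝ (S →ₗ[R] E))
    (p : Seminorm ℝ (E →ₗ[R] E)) {δ : ℝ} (hδ : 0 < δ) :
    ∃ h : E →ₗ[R] E, p (h - LinearMap.id) < δ ∧ ∀ i, Disjoint E₁ ((F i).comap h) := by
  have : IsArtinian R E := isArtinian_of_tower ℝ inferInstance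
  suffices H : ∀ X ≤ E₁, ∀ δ > 0, ∃ h : E →ₗ[R] E,
      p (h - LinearMap.id) < δ ∧ ∀ i, Disjoint X ((F i).comap h) from H E₁ le_rfl δ hδ
  intro X
  induction X using WellFoundedLT.induction with | ind X ih => ?_
  intro hX δ hδ
  rcases eq_bot_or_exists_atom_le X with rfl | ⟨S, hS, hSX⟩
  · exact ⟨LinearMap.id, by simpa, fun _ ↦ disjoint_bot_left⟩
  have hSimple : IsSimpleModule R S := isSimpleModule_iff_isAtom.2 hS
  obtain ⟨C, hSC⟩ := exists_isCompl S
  have inf_lt : X ⊓ C < X := inf_lt_left.2 fun hXC ↦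
    hS.1 (hSC.disjoint.eq_bot_of_le (hSX.trans hXC))
  obtain ⟨h, hh, hdisj⟩ := ih (X ⊓ C) inf_lt (inf_le_left.trans hX) (δ / 2) (half_pos hδ)
  have := IsSimpleModule.nontrivial R S
  obtain ⟨s, hs⟩ := exists_ne (0 : S)
  let P := S.projectionOnto C hSC
  obtain ⟨y, hy, hyF⟩ := exists_small_forall_add_notMem (hdim S (hSX.trans hX) hSimple) h
    (p.comp (LinearMap.lcomp ℝ E P)) (half_pos hδ) hs
  refine ⟨h + y ∘ₗ P, ?_, fun i ↦ disjoint_comap_add_comp_projectionOnto hSC (hdisj i)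
    fun k ↦ hyF i (Submodule.inclusion hX ∘ₗ k)⟩
  calc p (h + y ∘ₗ P - LinearMap.id) = p ((h - LinearMap.id) + y ∘ₗ P) := by
        rw [add_sub_right_comm]
    _ ≤ p (h - LinearMap.id) + p (y ∘ₗ P) := map_add_le_add p _ _
    _ < δ := by linarith [show p (y ∘ₗ P) < δ / 2 from hy]

end GeneralPosition

section Dimension

variable {𝕜 E X V κ : Type*} [NontriviallyNormedField 𝕜] [NormedAlgebra ℝ 𝕜]
  [FiniteDimensional ℝ 𝕜] [NormedAddCommGroup E] [NormedSpace 𝕜 E] [NormedSpace ℝ E]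
  [IsScalarTower ℝ 𝕜 E] [NormedAddCommGroup X] [NormedSpace ℝ X] [FiniteDimensional ℝ X]

theorem dimH_biUnion_span_range_le [Fintype κ] {a : κ → X → E} {s : Set X} (hs : Convex ℝ s)
    (ha : ∀ k, ContDiffOn ℝ 1 (a k) s) :
    dimH (⋃ x ∈ s, (Submodule.span 𝕜 (Set.range (a · x)) : Set E)) ≤
      (finrank ℝ X + finrank ℝ 𝕜 * Fintype.card κ : ℕ) := by
  let combination : X × (κ → 𝕜) → E := fun p ↦ ∑ k, p.2 k • a k p.1
  have combination_contDiffOn : ContDiffOn ℝ 1 combination (s ×ˢ Set.univ) :=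
    ContDiffOn.sum fun k _ ↦ ContDiffOn.smul (by fun_prop)
      ((ha k).comp contDiffOn_fst fun _ hp ↦ hp.1)
  have union_subset : (⋃ x ∈ s, (Submodule.span 𝕜 (Set.range (a · x)) : Set E)) ⊆
      combination '' (s ×ˢ Set.univ) := by
    refine Set.iUnion₂_subset fun x hx e he ↦ ?_
    obtain ⟨c, rfl⟩ := (Submodule.mem_span_range_iff_exists_fun 𝕜).1 he
    exact ⟨(x, c), ⟨hx, trivial⟩, rfl⟩
  calc dimH (⋃ x ∈ s, (Submodule.span 𝕜 (Set.range (a · x)) : Set E))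
      ≤ dimH (combination '' (s ×ˢ Set.univ)) := dimH_mono union_subset
    _ ≤ dimH (s ×ˢ (Set.univ : Set (κ → 𝕜))) :=
      combination_contDiffOn.dimH_image_le (hs.prod convex_univ) le_rfl
    _ ≤ dimH (Set.univ : Set (X × (κ → 𝕜))) := dimH_mono (Set.subset_univ _)
    _ = (finrank ℝ X + finrank ℝ 𝕜 * Fintype.card κ : ℕ) := by
      rw [Real.dimH_univ_eq_finrank, finrank_prod, finrank_pi_fintype]
      simp [mul_comm]

theorem dimH_biUnion_le_of_locally {V A : Type*} [TopologicalSpace V] [SecondCountableTopology V]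
    [EMetricSpace A] {F : V → Set A} {S : Set V} {d : ENNReal}
    (hF : ∀ v₀ ∈ S, ∃ N ∈ nhdsWithin v₀ S, dimH (⋃ v ∈ N, F v) ≤ d) :
    dimH (⋃ v ∈ S, F v) ≤ d := by
  choose! N hN hdim using hF
  obtain ⟨t, htS, ht, hcover⟩ := countable_cover_nhdsWithin hN
  calc dimH (⋃ v ∈ S, F v) ≤ dimH (⋃ v₀ ∈ t, ⋃ v ∈ N v₀, F v) := by
        refine dimH_mono (Set.iUnion₂_subset fun v hv ↦ ?_)
        obtain ⟨v₀, hv₀, hvN⟩ := Set.mem_iUnion₂.1 (hcover hv)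
        exact (Set.subset_biUnion_of_mem hvN).trans
          (Set.subset_biUnion_of_mem (u := fun v₀ ↦ ⋃ v ∈ N v₀, F v) hv₀)
    _ ≤ d := by
        rw [dimH_bUnion ht]
        exact iSup₂_le fun v₀ hv₀ ↦ hdim v₀ (htS hv₀)

variable {H : Type*} [TopologicalSpace H] (I : ModelWithCorners ℝ X H) [TopologicalSpace V]
  [ChartedSpace H V]

theorem dimH_biUnion_le_of_locally_le_span [SecondCountableTopology V] [Fintype κ]
    {F : V → Submodule 𝕜 E} {S : Set V}
    (hF : ∀ v₀ ∈ S, ∃ a : κ → X → E,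
      (∀ k, ContDiffWithinAt ℝ 1 (a k) (Set.range I) (extChartAt I v₀ v₀)) ∧
      ∀ᶠ v in nhdsWithin v₀ S, F v ≤ Submodule.span 𝕜 (Set.range (a · (extChartAt I v₀ v)))) :
    dimH (⋃ v ∈ S, (F v : Set E)) ≤ (finrank ℝ X + finrank ℝ 𝕜 * Fintype.card κ : ℕ) := by
  refine dimH_biUnion_le_of_locally fun v₀ hv₀ ↦ ?_
  obtain ⟨a, ha, hspan⟩ := hF v₀ hv₀
  have eventually_contDiffWithinAt : ∀ᶠ x in nhdsWithin (extChartAt I v₀ v₀) (Set.range I),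
      ∀ k, ContDiffWithinAt ℝ 1 (a k) (Set.range I) x :=
    Filter.eventually_all.2 fun k ↦ by
      have := (ha k).eventually (by simp)
      rwa [Set.insert_eq_of_mem (extChartAt_target_subset_range v₀ (mem_extChartAt_target v₀))]
        at this
  obtain ⟨r, hr, hball⟩ := Metric.mem_nhdsWithin_iff.1 eventually_contDiffWithinAt
  let s := Metric.ball (extChartAt I v₀ v₀) r ∩ Set.range I
  have chart_mem : ∀ᶠ v in nhdsWithin v₀ S, extChartAt I v₀ v ∈ s := by
    have chart_mem_ball := (continuousAt_extChartAt (I := I) v₀).eventually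
      (Metric.ball_mem_nhds _ hr)
    filter_upwards [nhdsWithin_le_nhds chart_mem_ball,
      nhdsWithin_le_nhds (extChartAt_source_mem_nhds (I := I) v₀)] with v hv hv'
    exact ⟨hv, extChartAt_target_subset_range v₀ ((extChartAt I v₀).map_source hv')⟩
  refine ⟨_, hspan.and chart_mem, ?_⟩
  refine (dimH_mono ?_).trans (dimH_biUnion_span_range_le (𝕜 := 𝕜)
    ((convex_ball _ r).inter I.convex_range) fun k x hx ↦ (hball hx k).mono Set.inter_subset_right)
  exact Set.iUnion₂_subset fun v hv ↦ Set.Subset.trans hv.1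
    (Set.subset_biUnion_of_mem (u := fun x ↦ (Submodule.span 𝕜 (Set.range (a · x)) : Set E)) hv.2)

end Dimension

section LocalCoordinates

variable {𝕜 E X H M B : Type*} [NontriviallyNormedField 𝕜] [NormedAddCommGroup X]
  [NormedSpace ℝ X] [TopologicalSpace H] (I : ModelWithCorners ℝ X H) [TopologicalSpace M]
  [ChartedSpace H M] [NormedAddCommGroup B] {𝓔 : M → Type*} [∀ x, TopologicalSpace (𝓔 x)]
  [TopologicalSpace (TotalSpace B 𝓔)] [FiberBundle B 𝓔]

/-- The map `f` on the total space of a bundle with typical fibre `B`, read at the vector `u : B`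
in the preferred chart and the preferred trivialization at `x₀`. Letting `u` run through a basis
of `B` gives the images under `f` of a local frame, as functions of the chart coordinate. -/
noncomputable def inCoordinatesAt (f : TotalSpace B 𝓔 → E) (x₀ : M) (u : B) (x : X) : E :=
  f ((trivializationAt B 𝓔 x₀).toPartialEquiv.symm ((extChartAt I x₀).symm x, u))

theorem contDiffWithinAt_inCoordinatesAt [NormedAddCommGroup E] [NormedSpace ℝ E]
    [NormedSpace ℝ B] [∀ x, Zero (𝓔 x)] {n : WithTop ℕ∞} {f : TotalSpace B 𝓔 → E}
    (hf : ContMDiff (I.prod 𝓘(ℝ, B)) 𝓘(ℝ, E) n f) (x₀ : M) (u : B) :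
    ContDiffWithinAt ℝ n (inCoordinatesAt I f x₀ u) (Set.range I) (extChartAt I x₀ x₀) := by
  let e := trivializationAt B 𝓔 x₀
  let p : TotalSpace B 𝓔 := ⟨x₀, e.symm x₀ u⟩
  have apply_p : e p = (x₀, u) := e.apply_mk_symm (mem_baseSet_trivializationAt B 𝓔 x₀) u
  have hfp := (contMDiffAt_iff.1 (hf p)).2
  rw [FiberBundle.extChartAt, modelWithCorners_prod_coe, Set.range_prodMap] at hfp
  have chart_p : ((trivializationAt B 𝓔 p.proj).toPartialEquiv ≫
      (extChartAt I p.proj).prod (PartialEquiv.refl B)) p = (extChartAt I x₀ x₀, u) :=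
    congrArg (Prod.map (extChartAt I x₀) id) apply_p
  rw [chart_p] at hfp
  exact ContDiffWithinAt.comp (f := fun x ↦ (x, u)) (extChartAt I x₀ x₀) hfp
    (contDiffWithinAt_id.prodMk contDiffWithinAt_const) fun x hx ↦ ⟨hx, u, rfl⟩

variable [AddCommGroup E] [Module 𝕜 E] [NormedSpace 𝕜 B] [∀ x, AddCommGroup (𝓔 x)]
  [∀ x, Module 𝕜 (𝓔 x)] [VectorBundle 𝕜 B 𝓔]

theorem eventually_mem_span_range_inCoordinatesAt {κ : Type*} (b : Basis κ 𝕜 B)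
    {f : TotalSpace B 𝓔 → E} (hf : ∀ x, IsLinearMap 𝕜 fun w : 𝓔 x ↦ f ⟨x, w⟩) (x₀ : M) :
    ∀ᶠ x in nhds x₀, ∀ w : 𝓔 x, f ⟨x, w⟩ ∈
      Submodule.span 𝕜 (Set.range fun k ↦ inCoordinatesAt I f x₀ (b k) (extChartAt I x₀ x)) := by
  let e := trivializationAt B 𝓔 x₀
  filter_upwards [e.open_baseSet.mem_nhds (mem_baseSet_trivializationAt B 𝓔 x₀),
    extChartAt_source_mem_nhds (I := I) x₀] with x hxe hxI w
  let L : B →ₗ[𝕜] E := (hf x).mk' ∘ₗ e.symmₗ 𝕜 x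
  have L_apply : ∀ u, L u = f ⟨x, e.symm x u⟩ := fun u ↦
    congrArg (fun w ↦ f ⟨x, w⟩) (congrFun (e.coe_symmₗ hxe) u)
  have L_eq_inCoordinatesAt : ∀ u, L u = inCoordinatesAt I f x₀ u (extChartAt I x₀ x) := by
    intro u
    rw [L_apply, e.mk_symm hxe, inCoordinatesAt, (extChartAt I x₀).left_inv hxI]
    rfl
  have fiber_eq : f ⟨x, w⟩ = L (e ⟨x, w⟩).2 := by
    rw [L_apply, e.symm_apply_apply_mk hxe]
  have range_L : LinearMap.range L = Submodule.span 𝕜 (Set.range (L ∘ b)) := by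
    rw [Set.range_comp, ← Submodule.map_span, b.span_eq, LinearMap.range_eq_map]
  rw [fiber_eq, ← funext fun k ↦ L_eq_inCoordinatesAt (b k)]
  exact range_L.le ⟨_, rfl⟩

end LocalCoordinates

section FiberwiseImage

/-- The span of the image of the fibre over `v` under a map `f` on the total space of a bundle
over an open subset `U` of `V`; it is `⊥` for `v ∉ U`. -/
def fiberwiseImage (𝕜 : Type*) {V B E : Type*} [Semiring 𝕜] [AddCommMonoid E] [Module 𝕜 E]
    [TopologicalSpace V] {U : Opens V} {𝓔 : U → Type*} (f : TotalSpace B 𝓔 → E) (v : V) :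
    Submodule 𝕜 E :=
  ⨆ hv : v ∈ U, Submodule.span 𝕜 (Set.range fun w : 𝓔 ⟨v, hv⟩ ↦ f ⟨⟨v, hv⟩, w⟩)

theorem map_fiberwiseImage {𝕜 V B E E' : Type*} [Semiring 𝕜] [AddCommMonoid E] [Module 𝕜 E]
    [AddCommMonoid E'] [Module 𝕜 E'] [TopologicalSpace V] {U : Opens V} {𝓔 : U → Type*}
    (T : E →ₗ[𝕜] E') (f : TotalSpace B 𝓔 → E) (v : V) :
    (fiberwiseImage 𝕜 f v).map T = fiberwiseImage 𝕜 (T ∘ f) v := by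
  simp only [fiberwiseImage, Submodule.map_iSup, Submodule.map_span, ← Set.range_comp]
  rfl

theorem fiberwiseImage_eq_bot_of_subsingleton {𝕜 B E V : Type*} [NontriviallyNormedField 𝕜]
    [NormedAddCommGroup B] [NormedSpace 𝕜 B] [Subsingleton B] [AddCommMonoid E] [Module 𝕜 E]
    [TopologicalSpace V] {U : Opens V} {𝓔 : U → Type*} [∀ x, AddCommGroup (𝓔 x)]
    [∀ x, Module 𝕜 (𝓔 x)] [∀ x, TopologicalSpace (𝓔 x)] [TopologicalSpace (TotalSpace B 𝓔)]
    [FiberBundle B 𝓔] [VectorBundle 𝕜 B 𝓔] {f : TotalSpace B 𝓔 → E}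
    (hlin : ∀ x, IsLinearMap 𝕜 fun w : 𝓔 x ↦ f ⟨x, w⟩) (v : V) : fiberwiseImage 𝕜 f v = ⊥ := by
  refine le_bot_iff.1 (iSup_le fun hv ↦ Submodule.span_le.2 ?_)
  rintro _ ⟨w, rfl⟩
  let x : U := ⟨v, hv⟩
  let e := (trivializationAt B 𝓔 x).continuousLinearEquivAt 𝕜 x
    (mem_baseSet_trivializationAt B 𝓔 x)
  have w_eq_zero : w = 0 := e.injective (Subsingleton.elim _ _)
  rw [w_eq_zero]
  exact (hlin x).map_zero

variable {𝕜 E X H V : Type*} [NontriviallyNormedField 𝕜] [NormedAddCommGroup E] [NormedSpace ℝ E]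
  [NormedSpace 𝕜 E] [NormedAddCommGroup X] [NormedSpace ℝ X] [TopologicalSpace H]
  (I : ModelWithCorners ℝ X H) [TopologicalSpace V] [ChartedSpace H V]

section LocalFrame

variable {B κ : Type*} [NormedAddCommGroup B] [NormedSpace ℝ B] [NormedSpace 𝕜 B]
  {U : Opens V} {𝓔 : U → Type*} [∀ x, AddCommGroup (𝓔 x)] [∀ x, Module 𝕜 (𝓔 x)]
  [∀ x, TopologicalSpace (𝓔 x)] [TopologicalSpace (TotalSpace B 𝓔)] [FiberBundle B 𝓔]
  [VectorBundle 𝕜 B 𝓔] {n : WithTop ℕ∞} {f : TotalSpace B 𝓔 → E}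

theorem exists_contDiffWithinAt_fiberwiseImage_le_span (b : Basis κ 𝕜 B)
    (hf : ContMDiff (I.prod 𝓘(ℝ, B)) 𝓘(ℝ, E) n f)
    (hlin : ∀ x, IsLinearMap 𝕜 fun w : 𝓔 x ↦ f ⟨x, w⟩) {v₀ : V} (hv₀ : v₀ ∈ U) :
    ∃ a : κ → X → E,
      (∀ k, ContDiffWithinAt ℝ n (a k) (Set.range I) (extChartAt I v₀ v₀)) ∧
      ∀ᶠ v in nhds v₀,
        fiberwiseImage 𝕜 f v ≤ Submodule.span 𝕜 (Set.range (a · (extChartAt I v₀ v))) := by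
  let x₀ : U := ⟨v₀, hv₀⟩
  refine ⟨fun k ↦ inCoordinatesAt I f x₀ (b k),
    fun k ↦ contDiffWithinAt_inCoordinatesAt I hf x₀ (b k), ?_⟩
  have nhds_eq : nhds v₀ = Filter.map Subtype.val (nhds x₀) :=
    (U.isOpen.isOpenEmbedding_subtypeVal.map_nhds_eq x₀).symm
  rw [nhds_eq, Filter.eventually_map]
  filter_upwards [eventually_mem_span_range_inCoordinatesAt I b hlin x₀] with x hx
  exact iSup_le fun _ ↦ Submodule.span_le.2 (Set.range_subset_iff.2 hx)

theorem exists_contDiffWithinAt_fiberwiseImage_le_span_nhdsWithin (b : Basis κ 𝕜 B)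
    (hf : ContMDiff (I.prod 𝓘(ℝ, B)) 𝓘(ℝ, E) n f)
    (hlin : ∀ x, IsLinearMap 𝕜 fun w : 𝓔 x ↦ f ⟨x, w⟩) {S : Set V}
    (hS : S ⊆ U ∨ Disjoint S U) {v₀ : V} (hv₀ : v₀ ∈ S) :
    ∃ a : κ → X → E,
      (∀ k, ContDiffWithinAt ℝ n (a k) (Set.range I) (extChartAt I v₀ v₀)) ∧
      ∀ᶠ v in nhdsWithin v₀ S,
        fiberwiseImage 𝕜 f v ≤ Submodule.span 𝕜 (Set.range (a · (extChartAt I v₀ v))) := by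
  rcases hS with hSU | hSU
  · obtain ⟨a, ha, hspan⟩ := exists_contDiffWithinAt_fiberwiseImage_le_span I b hf hlin (hSU hv₀)
    exact ⟨a, ha, nhdsWithin_le_nhds hspan⟩
  · refine ⟨0, fun _ ↦ contDiffWithinAt_const, ?_⟩
    filter_upwards [self_mem_nhdsWithin] with v hv
    exact iSup_le fun hvU ↦ (Set.disjoint_left.1 hSU hv hvU).elim

end LocalFrame

variable [NormedAlgebra ℝ 𝕜] [FiniteDimensional ℝ 𝕜] [IsScalarTower ℝ 𝕜 E]
  [FiniteDimensional ℝ X] [SecondCountableTopology V]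
  {ι : Type*} [Fintype ι] {B : ι → Type*} [∀ i, NormedAddCommGroup (B i)]
  [∀ i, NormedSpace ℝ (B i)] [∀ i, NormedSpace 𝕜 (B i)] [∀ i, FiniteDimensional 𝕜 (B i)]
  {U : ι → Opens V} {𝓔 : ∀ i, U i → Type*} [∀ i x, AddCommGroup (𝓔 i x)]
  [∀ i x, Module 𝕜 (𝓔 i x)] [∀ i x, TopologicalSpace (𝓔 i x)]
  [∀ i, TopologicalSpace (TotalSpace (B i) (𝓔 i))] [∀ i, FiberBundle (B i) (𝓔 i)]
  [∀ i, VectorBundle 𝕜 (B i) (𝓔 i)]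

theorem dimH_biUnion_iSup_fiberwiseImage_le {f : ∀ i, TotalSpace (B i) (𝓔 i) → E}
    (hf : ∀ i, ContMDiff (I.prod 𝓘(ℝ, B i)) 𝓘(ℝ, E) 1 (f i))
    (hlin : ∀ i x, IsLinearMap 𝕜 fun w : 𝓔 i x ↦ f i ⟨x, w⟩) {S : Set V}
    (hS : ∀ i, S ⊆ U i ∨ Disjoint S (U i)) :
    dimH (⋃ v ∈ S, ((⨆ i, fiberwiseImage 𝕜 (f i) v : Submodule 𝕜 E) : Set E)) ≤
      (finrank ℝ X + finrank ℝ 𝕜 * ∑ i, finrank 𝕜 (B i) : ℕ) := by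
  have card_eq : Fintype.card (Σ i, Fin (finrank 𝕜 (B i))) = ∑ i, finrank 𝕜 (B i) := by simp
  rw [← card_eq]
  refine dimH_biUnion_le_of_locally_le_span I fun v₀ hv₀ ↦ ?_
  choose a ha hspan using fun i ↦ exists_contDiffWithinAt_fiberwiseImage_le_span_nhdsWithin I
    (finBasis 𝕜 (B i)) (hf i) (hlin i) (hS i) hv₀
  refine ⟨fun k ↦ a k.1 k.2, fun k ↦ ha k.1 k.2, ?_⟩
  filter_upwards [Filter.eventually_all.2 hspan] with v hv
  refine iSup_le fun i ↦ (hv i).trans (Submodule.span_mono ?_)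
  rintro _ ⟨k, rfl⟩
  exact ⟨⟨i, k⟩, rfl⟩

theorem dimH_iUnion_iSup_fiberwiseImage_le {f : ∀ i, TotalSpace (B i) (𝓔 i) → E}
    (hf : ∀ i, ContMDiff (I.prod 𝓘(ℝ, B i)) 𝓘(ℝ, E) 1 (f i))
    (hlin : ∀ i x, IsLinearMap 𝕜 fun w : 𝓔 i x ↦ f i ⟨x, w⟩) :
    dimH (⋃ v, ((⨆ i, fiberwiseImage 𝕜 (f i) v : Submodule 𝕜 E) : Set E)) ≤
      (finrank ℝ X + finrank ℝ 𝕜 * ∑ i, finrank 𝕜 (B i) : ℕ) := by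
  let stratum (J : Set ι) : Set V := {v | ∀ i, v ∈ U i ↔ i ∈ J}
  have subset_or_disjoint (J : Set ι) (i : ι) : stratum J ⊆ U i ∨ Disjoint (stratum J) (U i) := by
    by_cases hi : i ∈ J
    · exact .inl fun v hv ↦ (hv i).2 hi
    · exact .inr (Set.disjoint_left.2 fun v hv hvU ↦ hi ((hv i).1 hvU))
  calc dimH (⋃ v, ((⨆ i, fiberwiseImage 𝕜 (f i) v : Submodule 𝕜 E) : Set E))
      ≤ dimH (⋃ J, ⋃ v ∈ stratum J, ((⨆ i, fiberwiseImage 𝕜 (f i) v : Submodule 𝕜 E) : Set E)) := by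
        refine dimH_mono (Set.iUnion_subset fun v e he ↦ ?_)
        simp only [Set.mem_iUnion]
        exact ⟨{i | v ∈ U i}, v, fun _ ↦ Iff.rfl, he⟩
    _ ≤ (finrank ℝ X + finrank ℝ 𝕜 * ∑ i, finrank 𝕜 (B i) : ℕ) := by
        rw [dimH_iUnion]
        exact iSup_le fun J ↦ dimH_biUnion_iSup_fiberwiseImage_le I hf hlin (subset_or_disjoint J)

end FiberwiseImage

section OrbitSpan

variable {k Γ E : Type*} [CommSemiring k] [Group Γ] [AddCommMonoid E] [Module k E]

/-- The smallest subspace invariant under the representation `ρ` that contains `P`. -/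
def orbitSpan (ρ : Representation k Γ E) (P : Submodule k E) : Submodule k E :=
  ⨆ γ, P.map (ρ γ)

theorem le_orbitSpan (ρ : Representation k Γ E) (P : Submodule k E) : P ≤ orbitSpan ρ P := by
  refine le_iSup_of_le 1 ?_
  simp [End.one_eq_id]

theorem orbitSpan_mem_invtSubmodule (ρ : Representation k Γ E) (P : Submodule k E) (γ : Γ) :
    orbitSpan ρ P ∈ End.invtSubmodule (ρ γ) := by
  rw [End.mem_invtSubmodule_iff_map_le, orbitSpan, Submodule.map_iSup]
  refine iSup_le fun γ' ↦ le_iSup_of_le (γ * γ') ?_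
  rw [map_mul, End.mul_eq_comp, Submodule.map_comp]

end OrbitSpan

universe u

section Representation

open Representation MonoidAlgebra

variable {Γ : Type*} [Group Γ]

section

variable {W E : Type*} [AddCommGroup W] [Module ℂ W] [Module ℂ[Γ] W]
  [IsScalarTower ℂ ℂ[Γ] W] [AddCommGroup E] [Module ℂ E]
  [Module ℂ[Γ] E] [IsScalarTower ℂ ℂ[Γ] E]

theorem isSimpleModule_asModule_ofModule' [IsSimpleModule ℂ[Γ] W] :
    IsSimpleModule ℂ[Γ] (ofModule' (k := ℂ) (G := Γ) W).asModule :=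
  IsSimpleModule.congr (M := (ofModule' (k := ℂ) (G := Γ) W).asModule) (N := W)
    { (ofModule' (k := ℂ) (G := Γ) W).asModuleEquiv with
      map_smul' r := by
        let action := Algebra.lsmul (A := ℂ[Γ]) ℂ ℂ W
        exact LinearMap.congr_fun (DFunLike.congr_fun
          ((MonoidAlgebra.lift ℂ (W →ₗ[ℂ] W) Γ).apply_symm_apply action) r) }

/-- Equivariant maps between representations are the same as `ℂ[Γ]`-linear maps between the
corresponding modules; this translates the former, in the encoding of `equivariantHomInto`, into
the latter. -/
noncomputable def equivariantHomIntoEquiv (N : Submodule ℂ[Γ] E) :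
    equivariantHomInto (ofModule' (k := ℂ) (G := Γ) E) (ofModule' W)
        (N.restrictScalars ℂ) ≃ₗ[ℂ]
      (W →ₗ[ℂ[Γ]] N) where
  toFun f := (equivariantOfLinearOfComm f.1 f.2.1).codRestrict N f.2.2
  invFun g := ⟨(N.subtype ∘ₗ g).restrictScalars ℂ,
    fun γ w ↦ congrArg Subtype.val (g.map_smul (single γ 1) w), fun w ↦ (g w).2⟩
  map_add' _ _ := rfl
  map_smul' _ _ := rfl
  left_inv _ := rfl
  right_inv _ := rfl

theorem finrank_equivariantHomInto_top :
    finrank ℂ (equivariantHomInto (ofModule' (k := ℂ) (G := Γ) E) (ofModule' W) ⊤) =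
      finrank ℂ (W →ₗ[ℂ[Γ]] E) :=
  (equivariantHomIntoEquiv ⊤ ≪≫ₗ LinearEquiv.ofLinearMap
    (LinearMap.compRight ℂ (⊤ : Submodule ℂ[Γ] E).subtype)
    (LinearMap.compRight ℂ (Submodule.topEquiv.symm : E ≃ₗ[ℂ[Γ]] _).toLinearMap) rfl rfl).finrank_eq

end

theorem exists_continuousLinearEquiv_eq_of_norm_sub_id_lt_one {𝕜 E : Type*}
    [NontriviallyNormedField 𝕜] [NormedAddCommGroup E] [NormedSpace 𝕜 E] [CompleteSpace E]
    {T : E →L[𝕜] E} (hT : ‖T - ContinuousLinearMap.id 𝕜 E‖ < 1) : ∃ e : E ≃L[𝕜] E, ↑e = T := by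
  have hunit : IsUnit T := by
    simpa using isUnit_one_sub_of_norm_lt_one (x := 1 - T) (by rwa [norm_sub_rev])
  exact ⟨ContinuousLinearEquiv.ofUnit hunit.unit, rfl⟩

theorem finrank_real_linearMap {R W M : Type*} [Ring R] [AddCommGroup W] [Module R W]
    [AddCommGroup M] [Module R M] [Module ℝ M] [Module ℂ M] [IsScalarTower ℝ ℂ M]
    [SMulCommClass R ℝ M] [SMulCommClass R ℂ M] :
    finrank ℝ (W →ₗ[R] M) = 2 * finrank ℂ (W →ₗ[R] M) := by
  rw [← finrank_mul_finrank ℝ ℂ, Complex.finrank_real_complex]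

variable [Finite Γ] {E : Type u} {ι : Type*} [NormedAddCommGroup E] [NormedSpace ℂ E]
  [FiniteDimensional ℂ E]

theorem exists_disjoint_comap_norm_sub_id_lt [Module ℂ[Γ] E] [IsScalarTower ℂ ℂ[Γ] E]
    (F : ι → Submodule ℂ[Γ] E) (E₁ : Submodule ℂ[Γ] E)
    (hdim : ∀ (W : Type u) [AddCommGroup W] [Module ℂ W] (σ : Representation ℂ Γ W),
      IsSimpleModule ℂ[Γ] σ.asModule → FiniteDimensional ℂ W →
      dimH (⋃ i, (F i : Set E)) +
        (2 * finrank ℂ (equivariantHomInto (ofModule' E) σ (E₁.restrictScalars ℂ)) : ℕ) <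
        (2 * finrank ℂ (equivariantHomInto (ofModule' E) σ ⊤) : ℕ))
    {ε : ℝ} (hε : 0 < ε) :
    ∃ h : E →ₗ[ℂ[Γ]] E,
      ‖(h.restrictScalars ℂ).toContinuousLinearMap - ContinuousLinearMap.id ℂ E‖ < ε ∧
      ∀ i, Disjoint E₁ ((F i).comap h) := by
  have : IsScalarTower ℝ ℂ[Γ] E := .to₁₃₄ ℝ ℂ ℂ[Γ] E
  have : FiniteDimensional ℝ E := FiniteDimensional.complexToReal E
  let toCLM : (E →ₗ[ℂ[Γ]] E) →ₗ[ℝ] E →L[ℂ] E :=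
    LinearMap.toContinuousLinearMap.toLinearMap.restrictScalars ℝ ∘ₗ
      LinearMap.restrictScalarsₗ ℂ ℂ[Γ] E E ℝ
  refine exists_disjoint_comap_of_dimH_lt F E₁ (fun S _ _ ↦ ?_)
    ((normSeminorm ℝ (E →L[ℂ] E)).comp toCLM) hε
  have : FiniteDimensional ℂ S := inferInstanceAs (FiniteDimensional ℂ (S.restrictScalars ℂ))
  rw [finrank_real_linearMap, finrank_real_linearMap, ← (equivariantHomIntoEquiv E₁).finrank_eq,
    ← finrank_equivariantHomInto_top]
  exact hdim S (ofModule' S) isSimpleModule_asModule_ofModule' this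

theorem exists_equivariant_disjoint_map_of_dimH_lt (ρ : Representation ℂ Γ E)
    {F : ι → Submodule ℂ E} (hF : ∀ i γ, F i ∈ End.invtSubmodule (ρ γ)) {E₁ : Submodule ℂ E}
    (hE₁ : ∀ γ, E₁ ∈ End.invtSubmodule (ρ γ))
    (hdim : ∀ (W : Type u) [AddCommGroup W] [Module ℂ W] (σ : Representation ℂ Γ W),
      IsSimpleModule ℂ[Γ] σ.asModule → FiniteDimensional ℂ W →
      dimH (⋃ i, (F i : Set E)) + (2 * finrank ℂ (equivariantHomInto ρ σ E₁) : ℕ) <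
        (2 * finrank ℂ (equivariantHomInto ρ σ ⊤) : ℕ))
    {ε : ℝ} (hε : 0 < ε) :
    ∃ h : E ≃L[ℂ] E, (∀ γ x, h (ρ γ x) = ρ γ (h x)) ∧
      ‖(h : E →L[ℂ] E) - ContinuousLinearMap.id ℂ E‖ < ε ∧
      ∀ i, Disjoint (E₁.map ((h : E →L[ℂ] E) : E →ₗ[ℂ] E)) (F i) := by
  let : Module ℂ[Γ] E := Module.compHom E ρ.asAlgebraHom.toRingHom
  have smul_def (r : ℂ[Γ]) (x : E) : r • x = ρ.asAlgebraHom r x := rfl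
  have : IsScalarTower ℂ ℂ[Γ] E := ⟨fun c r x ↦ by simp [smul_def]⟩
  have of_smul (γ : Γ) (x : E) : of ℂ Γ γ • x = ρ γ x := by simp [smul_def]
  have ofModule'_eq : ofModule' E = ρ := by
    ext γ x
    exact of_smul γ x
  rw [← ofModule'_eq] at hdim
  let toSubmodule (P : Submodule ℂ E) (hP : ∀ γ, P ∈ End.invtSubmodule (ρ γ)) :
      Submodule ℂ[Γ] E := submoduleOfSMulMem P fun γ x hx ↦ (of_smul γ x).symm ▸ hP γ hx
  obtain ⟨h, hnorm, hdisj⟩ := exists_disjoint_comap_norm_sub_id_lt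
    (fun i ↦ toSubmodule (F i) (hF i)) (toSubmodule E₁ hE₁) hdim (lt_min hε one_pos)
  obtain ⟨e, he⟩ := exists_continuousLinearEquiv_eq_of_norm_sub_id_lt_one
    (hnorm.trans_le (min_le_right _ _))
  have e_apply (x : E) : e x = h x := DFunLike.congr_fun he x
  refine ⟨e, fun γ x ↦ ?_, ?_, fun i ↦ ?_⟩
  · rw [e_apply, e_apply, ← of_smul, ← of_smul, map_smul]
  · rw [he]
    exact hnorm.trans_le (min_le_left _ _)
  · rw [Submodule.disjoint_def]
    rintro _ ⟨x, hx, rfl⟩ hxF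
    have hx_mem : h x ∈ F i := e_apply x ▸ hxF
    rw [Submodule.disjoint_def.1 (hdisj i) x hx hx_mem, map_zero]

end Representation

section Transversality

variable {E : Type u} {X H V : Type*} [NormedAddCommGroup E] [NormedSpace ℂ E]
  [FiniteDimensional ℂ E] [NormedAddCommGroup X] [NormedSpace ℝ X] [FiniteDimensional ℝ X]
  [TopologicalSpace H] (I : ModelWithCorners ℝ X H) [TopologicalSpace V]
  [SecondCountableTopology V] [ChartedSpace H V]
  {ι : Type*} [Fintype ι] {B : ι → Type*} [∀ i, NormedAddCommGroup (B i)]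
  [∀ i, NormedSpace ℂ (B i)] [∀ i, FiniteDimensional ℂ (B i)]
  {U : ι → Opens V} {𝓔 : ∀ i, U i → Type*} [∀ i x, AddCommGroup (𝓔 i x)]
  [∀ i x, Module ℂ (𝓔 i x)] [∀ i x, TopologicalSpace (𝓔 i x)]
  [∀ i, TopologicalSpace (TotalSpace (B i) (𝓔 i))] [∀ i, FiberBundle (B i) (𝓔 i)]
  [∀ i, VectorBundle ℂ (B i) (𝓔 i)] {Γ : Type*} [Group Γ] [Fintype Γ]
  {f : ∀ i, TotalSpace (B i) (𝓔 i) → E}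

theorem dimH_iUnion_orbitSpan_iSup_fiberwiseImage_le (ρ : Representation ℂ Γ E)
    (hf : ∀ i, ContMDiff (I.prod 𝓘(ℝ, B i)) 𝓘(ℝ, E) 1 (f i))
    (hlin : ∀ i x, IsLinearMap ℂ fun w : 𝓔 i x ↦ f i ⟨x, w⟩) :
    dimH (⋃ v, (orbitSpan ρ (⨆ i, fiberwiseImage ℂ (f i) v) : Set E)) ≤
      (finrank ℝ X + 2 * (Fintype.card Γ * ∑ i, finrank ℂ (B i)) : ℕ) := by
  have orbitSpan_eq (v : V) : orbitSpan ρ (⨆ i, fiberwiseImage ℂ (f i) v) =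
      ⨆ j : Γ × ι, fiberwiseImage ℂ (ρ j.1 ∘ f j.2) v := by
    simp only [orbitSpan, Submodule.map_iSup, map_fiberwiseImage, iSup_prod]
  have action_contMDiff (γ : Γ) : ContMDiff 𝓘(ℝ, E) 𝓘(ℝ, E) 1 (ρ γ) :=
    ((ρ γ).toContinuousLinearMap.restrictScalars ℝ).contMDiff
  have hdim := dimH_iUnion_iSup_fiberwiseImage_le I (𝕜 := ℂ) (B := fun j : Γ × ι ↦ B j.2)
    (f := fun j ↦ ρ j.1 ∘ f j.2) (fun j ↦ (action_contMDiff j.1).comp (hf j.2))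
    fun j x ↦ ((ρ j.1) ∘ₗ (hlin j.2 x).mk').isLinear
  have sum_finrank : ∑ j : Γ × ι, finrank ℂ (B j.2) = Fintype.card Γ * ∑ i, finrank ℂ (B i) := by
    rw [Fintype.sum_prod_type, ← smul_eq_mul, ← Finset.card_univ, ← Finset.sum_const]
  simpa only [orbitSpan_eq, Complex.finrank_real_complex, sum_finrank] using hdim

theorem exists_equivariant_disjoint_map_iSup_fiberwiseImage (ρ : Representation ℂ Γ E)
    (hf : ∀ i, ContMDiff (I.prod 𝓘(ℝ, B i)) 𝓘(ℝ, E) 1 (f i))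
    (hlin : ∀ i x, IsLinearMap ℂ fun w : 𝓔 i x ↦ f i ⟨x, w⟩) {E₁ : Submodule ℂ E}
    (hE₁ : ∀ γ, E₁ ∈ End.invtSubmodule (ρ γ))
    (hdim : ∀ (W : Type u) [AddCommGroup W] [Module ℂ W] (σ : Representation ℂ Γ W),
      IsSimpleModule (MonoidAlgebra ℂ Γ) σ.asModule → FiniteDimensional ℂ W →
      finrank ℝ X + 2 * (Fintype.card Γ * ∑ i, finrank ℂ (B i)) +
        2 * finrank ℂ (equivariantHomInto ρ σ E₁) < 2 * finrank ℂ (equivariantHomInto ρ σ ⊤))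
    {ε : ℝ} (hε : 0 < ε) :
    ∃ h : E ≃L[ℂ] E, (∀ γ x, h (ρ γ x) = ρ γ (h x)) ∧
      ‖(h : E →L[ℂ] E) - ContinuousLinearMap.id ℂ E‖ < ε ∧
      ∀ v, Disjoint (E₁.map ((h : E →L[ℂ] E) : E →ₗ[ℂ] E)) (⨆ i, fiberwiseImage ℂ (f i) v) := by
  obtain ⟨h, hequiv, hnorm, hdisj⟩ := exists_equivariant_disjoint_map_of_dimH_lt ρ
    (F := fun v ↦ orbitSpan ρ (⨆ i, fiberwiseImage ℂ (f i) v))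
    (fun _ ↦ orbitSpan_mem_invtSubmodule ρ _) hE₁ (fun W _ _ σ hσ hW ↦ by
      grw [dimH_iUnion_orbitSpan_iSup_fiberwiseImage_le I ρ hf hlin]
      exact_mod_cast hdim W σ hσ hW) hε
  exact ⟨h, hequiv, hnorm, fun v ↦ (hdisj v).mono_right (le_orbitSpan ρ _)⟩

theorem dense_equivariant_subspaces_transverse_to_fiberwise_images_general
    (hX : 1 ≤ finrank ℝ X) (ρ : Representation ℂ Γ E)
    (hf : ∀ i, ContMDiff (I.prod 𝓘(ℝ, B i)) 𝓘(ℝ, E) 1 (f i))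
    (hlin : ∀ i x, IsLinearMap ℂ fun w : 𝓔 i x ↦ f i ⟨x, w⟩) {E₁ : Submodule ℂ E}
    (hE₁ : ∀ γ, E₁ ∈ End.invtSubmodule (ρ γ))
    (hdim : ∀ (W : Type u) [AddCommGroup W] [Module ℂ W] (σ : Representation ℂ Γ W),
      IsSimpleModule (MonoidAlgebra ℂ Γ) σ.asModule → FiniteDimensional ℂ W →
      finrank ℂ (equivariantHomInto ρ σ E₁) +
          Fintype.card Γ * (finrank ℝ X * ∑ i, finrank ℂ (B i)) <
        finrank ℂ (equivariantHomInto ρ σ ⊤))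
    {ε : ℝ} (hε : 0 < ε) :
    ∃ h : E ≃L[ℂ] E, (∀ γ x, h (ρ γ x) = ρ γ (h x)) ∧
      ‖(h : E →L[ℂ] E) - ContinuousLinearMap.id ℂ E‖ < ε ∧
      ∀ v, Disjoint (E₁.map ((h : E →L[ℂ] E) : E →ₗ[ℂ] E)) (⨆ i, fiberwiseImage ℂ (f i) v) := by
  rcases (∑ i, finrank ℂ (B i)).eq_zero_or_pos with hsum | hsum
  · have fiber_subsingleton (i : ι) : Subsingleton (B i) :=
      finrank_zero_iff.1 (Finset.sum_eq_zero_iff.1 hsum i (Finset.mem_univ i))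
    refine ⟨.refl ℂ E, fun _ _ ↦ rfl, by simpa using hε, fun v ↦ ?_⟩
    simp only [fiberwiseImage_eq_bot_of_subsingleton (hlin _), iSup_bot, disjoint_bot_right]
  · refine exists_equivariant_disjoint_map_iSup_fiberwiseImage I ρ hf hlin hE₁
      (fun W _ _ σ hσ hW ↦ ?_) hε
    have hpos : 0 < Fintype.card Γ * ∑ i, finrank ℂ (B i) := Nat.mul_pos Fintype.card_pos hsum
    nlinarith [hdim W σ hσ hW]

end Transversality

/-- **Lemma 11.6 of the paper (the `Γ`-equivariant version of Lemma 11.4).**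
Setting as in Lemma 11.4, with in addition a finite group `Γ` of order `g` acting on `E` by a
`ℂ`-linear representation `ρ`.  Assume every finite-dimensional simple `ℂ[Γ]`-module has
multiplicity `> d′` in `E`, and let `E₁` be a `Γ`-invariant subspace such that (for every
finite-dimensional simple `ℂ[Γ]`-module `W`) the multiplicity `a_W` of `W` in `E₁` satisfies
`a_W + g·D·(d₁ + … + d_l) < d′` (i.e. `a + g·D·∑dᵢ < d′` for `a` the maximal multiplicity).
Then for every `ε > 0` there is a `Γ`-equivariant automorphism `h` of `E` with `‖h - id‖ < ε`
such that `E₀ = h(E₁)` satisfies `E₀ ∩ F(v) = {0}` for all `v ∈ V`.  (The data `Vo, K, Efam,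
Fmap` are not assumed `Γ`-equivariant.) -/
theorem dense_equivariant_subspaces_transverse_to_fiberwise_images
    {D l d' : ℕ} (hD : 1 ≤ D)
    {E : Type} [NormedAddCommGroup E] [NormedSpace ℂ E] [FiniteDimensional ℂ E]
    {V : Type} [TopologicalSpace V] [T2Space V] [SecondCountableTopology V]
    [ChartedSpace (EuclideanSpace ℝ (Fin D)) V]
    [HasGroupoid V (contDiffGroupoid 1 (𝓡 D))]
    (dI : Fin l → ℕ)
    (Vo : Fin l → Opens V) (K : Fin l → Set V)
    (hKcpt : ∀ i, IsCompact (K i)) (hKV : ∀ i, K i ⊆ (Vo i : Set V))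
    (Efam : (i : Fin l) → (Vo i) → Type)
    [∀ i x, AddCommGroup (Efam i x)] [∀ i x, Module ℂ (Efam i x)]
    [∀ i x, TopologicalSpace (Efam i x)]
    [∀ i, TopologicalSpace (TotalSpace (EuclideanSpace ℂ (Fin (dI i))) (Efam i))]
    [∀ i, FiberBundle (EuclideanSpace ℂ (Fin (dI i))) (Efam i)]
    [∀ i, VectorBundle ℂ (EuclideanSpace ℂ (Fin (dI i))) (Efam i)]
    -- the coordinate changes of each bundle are `C¹`
    (hbundle : ∀ i, ∀ (e e' : Trivialization (EuclideanSpace ℂ (Fin (dI i)))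
        (Bundle.TotalSpace.proj (E := Efam i)))
        [MemTrivializationAtlas e] [MemTrivializationAtlas e'],
        ContMDiffOn (𝓡 D)
          𝓘(ℝ, EuclideanSpace ℂ (Fin (dI i)) →L[ℂ] EuclideanSpace ℂ (Fin (dI i))) 1
          (fun b => (e.coordChangeL ℂ e' b :
            EuclideanSpace ℂ (Fin (dI i)) →L[ℂ] EuclideanSpace ℂ (Fin (dI i))))
          (e.baseSet ∩ e'.baseSet))
    (Fmap : (i : Fin l) → TotalSpace (EuclideanSpace ℂ (Fin (dI i))) (Efam i) → E)
    (hFC1 : ∀ i, ContMDiff ((𝓡 D).prod 𝓘(ℝ, EuclideanSpace ℂ (Fin (dI i)))) 𝓘(ℝ, E) 1 (Fmap i))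
    (hFlin : ∀ i (x : Vo i), IsLinearMap ℂ (fun w : Efam i x => Fmap i ⟨x, w⟩))
    -- the finite group `Γ` and its representation `ρ` on `E`
    (Γ : Type) [Group Γ] [Fintype Γ]
    (ρ : Representation ℂ Γ E)
    -- every finite-dimensional simple `ℂ[Γ]`-module has multiplicity `> d′` in `E`
    (hbig : ∀ (W : Type) [AddCommGroup W] [Module ℂ W] (σW : Representation ℂ Γ W),
      IsSimpleModule (MonoidAlgebra ℂ Γ) σW.asModule → FiniteDimensional ℂ W →
      d' < finrank ℂ (equivariantHomInto ρ σW (⊤ : Submodule ℂ E)))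
    -- `E₁` is a `Γ`-invariant subspace
    (E₁ : Submodule ℂ E) (hE₁inv : ∀ γ : Γ, Submodule.map (ρ γ) E₁ = E₁)
    -- `a + g·D·(d₁ + … + d_l) < d′`, where `a` is the maximal multiplicity of a simple
    -- module in `E₁`
    (hdim : ∀ (W : Type) [AddCommGroup W] [Module ℂ W] (σW : Representation ℂ Γ W),
      IsSimpleModule (MonoidAlgebra ℂ Γ) σW.asModule → FiniteDimensional ℂ W →
      finrank ℂ (equivariantHomInto ρ σW E₁) + Fintype.card Γ * (D * (∑ i, dI i)) < d')
    (ε : ℝ) (hε : 0 < ε) :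
    ∃ h : E ≃L[ℂ] E,
      (∀ (γ : Γ) (x : E), h (ρ γ x) = ρ γ (h x)) ∧
      ‖(h : E →L[ℂ] E) - ContinuousLinearMap.id ℂ E‖ < ε ∧
      ∀ v : V,
        (Submodule.map ((h : E →L[ℂ] E) : E →ₗ[ℂ] E) E₁) ⊓
          (⨆ i, ⨆ (hv : v ∈ K i),
            Submodule.span ℂ (Set.range fun w : Efam i ⟨v, hKV i hv⟩ =>
              Fmap i ⟨⟨v, hKV i hv⟩, w⟩)) = ⊥ := by
  obtain ⟨h, hequiv, hnorm, hdisj⟩ :=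
    dense_equivariant_subspaces_transverse_to_fiberwise_images_general (𝓡 D) (by simpa) ρ hFC1 hFlin
      (fun γ ↦ (End.mem_invtSubmodule_iff_map_le _).2 (hE₁inv γ).le)
      (fun W _ _ σ hσ hW ↦ by simpa using (hdim W σ hσ hW).trans (hbig W σ hσ hW)) hε
  refine ⟨h, hequiv, hnorm, fun v ↦ ((hdisj v).mono_right (iSup_mono fun i ↦ ?_)).eq_bot⟩
  exact iSup_le fun hv ↦ le_iSup_of_le (hKV i hv) le_rfl
end
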